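/- There exists a constant c such that for every natural number n and all natural numbers α, β with 2α + β < n − c·log(n+2), there exists a binary string of length n that is not (α, β)-stochastic. (Existence of non-stochastic objects.) -/

import Mathlib

open scoped Classical

/-- Binary strings: finite sequences over `{0,1}`. -/
abbrev BStr := List Bool

/-- Complexity of `x` with respect to the description method `D`:
the minimal length of a `p` with `D(p) = x`, as an extended natural
(`⊤` if no such `p` exists). -/
noncomputable def Cw (D : BStr →. BStr) (x : BStr) : ℕ∞ :=
  ⨅ (p : BStr) (_ : x ∈ D p), (p.length : ℕ∞)

/-- A description method is optimal if it is partial computable and gives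
complexity at most that of any other partial computable description method,
up to an additive constant. -/
def OptimalDM (D : BStr →. BStr) : Prop :=
  Partrec D ∧ ∀ D' : BStr →. BStr, Partrec D' →
    ∃ c : ℕ, ∀ x : BStr, Cw D x ≤ Cw D' x + (c : ℕ∞)

/-- Plain Kolmogorov complexity (finite value) w.r.t. a description method. -/
noncomputable def C (D : BStr →. BStr) (x : BStr) : ℕ := (Cw D x).toNat

/-- Conditional complexity of `x` given `y` w.r.t. the conditional
description method `E`. -/
noncomputable def CwCond (E : BStr → BStr →. BStr) (x y : BStr) : ℕ∞ :=
  ⨅ (p : BStr) (_ : x ∈ E p y), (p.length : ℕ∞)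

/-- Optimal conditional description method. -/
def OptimalCDM (E : BStr → BStr →. BStr) : Prop :=
  Partrec₂ E ∧ ∀ E' : BStr → BStr →. BStr, Partrec₂ E' →
    ∃ c : ℕ, ∀ x y : BStr, CwCond E x y ≤ CwCond E' x y + (c : ℕ∞)

/-- Conditional Kolmogorov complexity (finite value). -/
noncomputable def Ccond (E : BStr → BStr →. BStr) (x y : BStr) : ℕ :=
  (CwCond E x y).toNat

/-- `enc` is a computable injective encoding of finite sets of binary strings
as binary strings (computability is expressed on the level of lists of
elements, since every finite set is the set of members of a list). -/
def SetEncoding (enc : Finset BStr → BStr) : Prop :=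
  Function.Injective enc ∧ Computable (fun l : List BStr => enc l.toFinset)

/-- A computable step-counting semantics for the description method `D`:
`ev t p` is the output of `D` on program `p` within `t` computation steps
(`none` if the computation has not converged within `t` steps). -/
structure TimedDM (D : BStr →. BStr) where
  ev : ℕ → BStr → Option BStr
  computable : Computable₂ ev
  mono : ∀ {t t' : ℕ} {p y : BStr}, t ≤ t' → ev t p = some y → ev t' p = some y
  spec : ∀ p y : BStr, y ∈ D p ↔ ∃ t : ℕ, ev t p = some y

/-- Time-bounded complexity `C^t(x)`: the minimal length of a program
producing `x` within `t` steps (`⊤` if there is none). -/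
noncomputable def Cwt (ev : ℕ → BStr → Option BStr) (t : ℕ) (x : BStr) : ℕ∞ :=
  ⨅ (p : BStr) (_ : ev t p = some x), (p.length : ℕ∞)

/-- `B D k`: the largest natural number whose binary representation has
complexity at most `k` (naturals are identified with their binary
representations via `Nat.bits`). -/
noncomputable def B (D : BStr →. BStr) (k : ℕ) : ℕ :=
  sSup {m : ℕ | Cw D (Nat.bits m) ≤ (k : ℕ∞)}

/-- Kolmogorov's `(α,β)`-stochasticity: `x` belongs to a finite set `S` of
complexity at most `α` in which it is random up to `β`. -/
def Stochastic (D : BStr →. BStr) (enc : Finset BStr → BStr)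
    (α β : ℕ) (x : BStr) : Prop :=
  ∃ S : Finset BStr, x ∈ S ∧ C D (enc S) ≤ α ∧
    Real.logb 2 S.card - β ≤ (C D x : ℝ)

/-- The binary entropy function (with the convention `H(0) = H(1) = 0`,
which holds automatically since `logb 2 0 = 0` in Mathlib). -/
noncomputable def binH (p : ℝ) : ℝ :=
  -(p * Real.logb 2 p) - (1 - p) * Real.logb 2 (1 - p)

namespace NonStoch

/-- A primitive recursive step-bounded evaluator for a partial recursive function. -/
theorem exists_ev {A T : Type} [Primcodable A] [Primcodable T] {f : A →. T} (hf : Partrec f) :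
    ∃ ev : ℕ → A → Option T, Primrec₂ ev ∧
      (∀ t t' a y, t ≤ t' → ev t a = some y → ev t' a = some y) ∧
      (∀ a y, y ∈ f a ↔ ∃ t, ev t a = some y) := by
  obtain ⟨c, hc⟩ := Nat.Partrec.Code.exists_code.1 hf
  refine ⟨fun t a => (Nat.Partrec.Code.evaln t c (Encodable.encode a)).bind
    (fun k => (Encodable.decode k : Option T)), ?_, ?_, ?_⟩
  · refine Primrec.option_bind ?_ ?_
    · exact Nat.Partrec.Code.primrec_evaln.comp
        ((Primrec.fst.pair (Primrec.const c)).pair (Primrec.encode.comp Primrec.snd))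
    · exact Primrec.decode.comp Primrec.snd
  · intro t t' a y h hy
    simp only [Option.bind_eq_some_iff] at hy ⊢
    obtain ⟨k, hk, hk'⟩ := hy
    exact ⟨k, Nat.Partrec.Code.evaln_mono h hk, hk'⟩
  · intro a y
    have key : ∀ k, k ∈ Nat.Partrec.Code.eval c (Encodable.encode a) ↔
        ∃ z ∈ f a, Encodable.encode z = k := by
      intro k
      rw [hc]
      simp
    constructor
    · intro hy
      obtain ⟨t, ht⟩ := Nat.Partrec.Code.evaln_complete.1 ((key _).2 ⟨y, hy, rfl⟩)
      refine ⟨t, ?_⟩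
      rw [Option.mem_def] at ht
      simp [ht]
    · rintro ⟨t, ht⟩
      simp only [Option.bind_eq_some_iff] at ht
      obtain ⟨k, hk, hk'⟩ := ht
      obtain ⟨z, hz, rfl⟩ := (key k).1 (Nat.Partrec.Code.evaln_complete.2 ⟨t, hk⟩)
      simp at hk'
      exact hk' ▸ hz

/-- All strings of length `k`. -/
def allStr (k : ℕ) : List BStr :=
  Nat.rec [[]] (fun _ l => l.flatMap fun s => [false :: s, true :: s]) k

/-- All strings of length at most `k`. -/
def strsLE (k : ℕ) : List BStr :=
  Nat.rec [[]] (fun _ l => [] :: l.flatMap fun s => [false :: s, true :: s]) k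

theorem allStr_succ (k : ℕ) :
    allStr (k + 1) = (allStr k).flatMap fun s => [false :: s, true :: s] := rfl

theorem strsLE_succ (k : ℕ) :
    strsLE (k + 1) = [] :: (strsLE k).flatMap fun s => [false :: s, true :: s] := rfl

theorem primrec_step : Primrec (fun l : List BStr => l.flatMap fun s => [false :: s, true :: s]) := by
  refine Primrec.list_flatMap Primrec.id ?_
  refine Primrec.list_cons.comp (Primrec.list_cons.comp (Primrec.const false) Primrec.snd) ?_
  exact Primrec.list_cons.comp (Primrec.list_cons.comp (Primrec.const true) Primrec.snd)
    (Primrec.const [])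

theorem primrec_allStr : Primrec allStr :=
  Primrec.nat_rec₁ _ (primrec_step.comp Primrec.snd)

theorem primrec_strsLE : Primrec strsLE :=
  Primrec.nat_rec₁ _ (Primrec.list_cons.comp (Primrec.const []) (primrec_step.comp Primrec.snd))

theorem length_step (l : List BStr) :
    (l.flatMap fun s => [false :: s, true :: s]).length = 2 * l.length := by
  induction l with
  | nil => rfl
  | cons a l ih => simp only [List.flatMap_cons, List.length_append, ih]; simp; omega

theorem mem_step (l : List BStr) (b : Bool) (s : BStr) :
    (b :: s) ∈ (l.flatMap fun s => [false :: s, true :: s]) ↔ s ∈ l := by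
  cases b <;> simp [List.mem_flatMap]

theorem nil_mem_step (l : List BStr) :
    ([] : BStr) ∉ (l.flatMap fun s => [false :: s, true :: s]) := by
  simp [List.mem_flatMap]

theorem nodup_step (l : List BStr) (h : l.Nodup) :
    (l.flatMap fun s => [false :: s, true :: s]).Nodup := by
  induction l with
  | nil => simp
  | cons a l ih =>
    rw [List.nodup_cons] at h
    rw [List.flatMap_cons, List.nodup_append]
    refine ⟨by simp, ih h.2, ?_⟩
    intro x hx y hy hxy
    subst hxy
    simp only [List.mem_cons, List.not_mem_nil, or_false] at hx
    rcases hx with rfl | rfl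
    · exact h.1 ((mem_step _ _ _).1 hy)
    · exact h.1 ((mem_step _ _ _).1 hy)

theorem length_allStr (k : ℕ) : (allStr k).length = 2 ^ k := by
  induction k with
  | zero => rfl
  | succ k ih => rw [allStr_succ, length_step, ih, pow_succ, mul_comm]

theorem nodup_allStr (k : ℕ) : (allStr k).Nodup := by
  induction k with
  | zero => simp [allStr]
  | succ k ih => rw [allStr_succ]; exact nodup_step _ ih

theorem mem_allStr (k : ℕ) (s : BStr) : s ∈ allStr k ↔ s.length = k := by
  induction k generalizing s with
  | zero => simp [allStr]
  | succ k ih =>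
    rw [allStr_succ]
    cases s with
    | nil => simp
    | cons b s => rw [mem_step, ih]; simp

theorem length_strsLE (k : ℕ) : (strsLE k).length + 1 = 2 ^ (k + 1) := by
  induction k with
  | zero => rfl
  | succ k ih => rw [strsLE_succ, List.length_cons, length_step, pow_succ, ← ih]; ring

theorem mem_strsLE (k : ℕ) (s : BStr) : s ∈ strsLE k ↔ s.length ≤ k := by
  induction k generalizing s with
  | zero => simp [strsLE]
  | succ k ih =>
    rw [strsLE_succ]
    cases s with
    | nil => simp
    | cons b s => rw [List.mem_cons, mem_step, ih]; simp

/-- Value of a binary string. -/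
def val (u : BStr) : ℕ := u.foldr (fun b acc => 2 * acc + cond b 1 0) 0

theorem primrec_val : Primrec val := by
  refine Primrec.list_foldr (h := fun _ (p : Bool × ℕ) => 2 * p.2 + cond p.1 1 0)
    Primrec.id (Primrec.const 0) ?_
  refine Primrec.nat_add.comp
    (Primrec.nat_mul.comp (Primrec.const 2) (Primrec.snd.comp Primrec.snd)) ?_
  exact Primrec.cond (Primrec.fst.comp Primrec.snd) (Primrec.const 1) (Primrec.const 0)

theorem val_bits (n : ℕ) : val (Nat.bits n) = n := by
  induction n using Nat.binaryRec' with
  | zero => simp [val]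
  | bit b n h ih =>
    rw [Nat.bits_append_bit n b h]
    have : val (b :: n.bits) = 2 * val n.bits + cond b 1 0 := rfl
    rw [this, ih, Nat.bit_val]
    cases b <;> rfl

/-- Self-delimiting pairing of strings. -/
def code (p : BStr × BStr) : BStr := (p.1.flatMap fun b => [true, b]) ++ false :: p.2

theorem primrec_code : Primrec code := by
  refine Primrec.list_append.comp (Primrec.list_flatMap Primrec.fst ?_)
    (Primrec.list_cons.comp (Primrec.const false) Primrec.snd)
  exact Primrec.list_cons.comp (Primrec.const true)
    (Primrec.list_cons.comp Primrec.snd (Primrec.const []))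

theorem code_inj : ∀ (u v p q : BStr), code (u, p) = code (v, q) → u = v ∧ p = q
  | [], [], p, q, h => by simpa [code] using h
  | [], b :: v, p, q, h => by simp [code] at h
  | a :: u, [], p, q, h => by simp [code] at h
  | a :: u, b :: v, p, q, h => by
    have h' : a = b ∧ code (u, p) = code (v, q) := by simpa [code] using h
    obtain ⟨h1, h2⟩ := code_inj u v p q h'.2
    exact ⟨by rw [h'.1, h1], h2⟩

theorem length_code (u p : BStr) : (code (u, p)).length = 2 * u.length + 1 + p.length := by
  induction u with
  | nil => simp [code]; omega
  | cons b u ih =>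
    have : code (b :: u, p) = true :: b :: code (u, p) := by simp [code]
    rw [this, List.length_cons, List.length_cons, ih, List.length_cons]; omega

/-- Intersection and difference of lists. -/
def inter (l m : List BStr) : List BStr := l.filter (fun x => ∃ y ∈ m, y = x)
def sdiff (l m : List BStr) : List BStr := l.filter (fun x => ¬ ∃ y ∈ m, y = x)

theorem primrecRel_mem : PrimrecRel (fun (x : BStr) (m : List BStr) => ∃ y ∈ m, y = x) :=
  (PrimrecRel.exists_mem_list (R := fun y x : BStr => y = x) Primrec.eq).comp
    Primrec.snd Primrec.fst

theorem primrec_inter : Primrec₂ inter := primrecRel_mem.listFilter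
theorem primrec_sdiff : Primrec₂ sdiff :=
  (PrimrecRel.listFilter (R := fun (x : BStr) (m : List BStr) => ¬ ∃ y ∈ m, y = x)
    (PrimrecPred.not primrecRel_mem))

theorem mem_inter (l m : List BStr) (x : BStr) : x ∈ inter l m ↔ x ∈ l ∧ x ∈ m := by
  simp [inter]
theorem mem_sdiff (l m : List BStr) (x : BStr) : x ∈ sdiff l m ↔ x ∈ l ∧ x ∉ m := by
  simp [sdiff]

/-- Restriction of `m` to length `n`, dropped if it has at least `2^k` elements. -/
def small (n k : ℕ) (m : List BStr) : List BStr :=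
  if (inter (allStr n) m).length < (allStr k).length then inter (allStr n) m else []

theorem primrec_small : Primrec (fun a : (ℕ × ℕ) × List BStr => small a.1.1 a.1.2 a.2) := by
  have h : Primrec (fun a : (ℕ × ℕ) × List BStr => inter (allStr a.1.1) a.2) :=
    primrec_inter.comp (primrec_allStr.comp (Primrec.fst.comp Primrec.fst)) Primrec.snd
  refine Primrec.ite (Primrec.nat_lt.comp (Primrec.list_length.comp h)
    (Primrec.list_length.comp (primrec_allStr.comp (Primrec.snd.comp Primrec.fst)))) h
    (Primrec.const [])

theorem length_small (n k : ℕ) (m : List BStr) : (small n k m).length ≤ 2 ^ k := by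
  unfold small
  split_ifs with h
  · rw [length_allStr] at h; exact h.le
  · simp

/-- Union of all small sets produced by short programs within `t` steps. -/
def bad (ev : ℕ → BStr → Option (List BStr)) (n α t : ℕ) : List BStr :=
  (strsLE α).flatMap fun q => small n (n - α - 1) ((ev t q).getD [])

/-- First string of length `n` outside all of the small sets. -/
def out (ev : ℕ → BStr → Option (List BStr)) (n α t : ℕ) : BStr :=
  (sdiff (allStr n) (bad ev n α t)).headI

theorem primrec_out {ev : ℕ → BStr → Option (List BStr)} (hev : Primrec₂ ev) :
    Primrec (fun a : (ℕ × ℕ) × ℕ => out ev a.1.1 a.1.2 a.2) := by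
  have hn : Primrec (fun a : (ℕ × ℕ) × ℕ => a.1.1) := Primrec.fst.comp Primrec.fst
  have ha : Primrec (fun a : (ℕ × ℕ) × ℕ => a.1.2) := Primrec.snd.comp Primrec.fst
  refine Primrec.list_headI.comp (α := (ℕ × ℕ) × ℕ)
    (g := fun a => sdiff (allStr a.1.1) (bad ev a.1.1 a.1.2 a.2)) ?_
  refine primrec_sdiff.comp (primrec_allStr.comp hn) ?_
  have hk : Primrec (fun a : (ℕ × ℕ) × ℕ => a.1.1 - a.1.2 - 1) :=
    Primrec.nat_sub.comp (Primrec.nat_sub.comp hn ha) (Primrec.const 1)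
  have he : Primrec (fun b : ((ℕ × ℕ) × ℕ) × BStr => (ev b.1.2 b.2).getD []) :=
    Primrec.option_getD.comp
      (hev.comp (Primrec.snd.comp Primrec.fst) Primrec.snd) (Primrec.const [])
  have hs : Primrec (fun b : ((ℕ × ℕ) × ℕ) × BStr =>
      small b.1.1.1 (b.1.1.1 - b.1.1.2 - 1) ((ev b.1.2 b.2).getD [])) :=
    primrec_small.comp (f := fun a : (ℕ × ℕ) × List BStr => small a.1.1 a.1.2 a.2)
      (g := fun b : ((ℕ × ℕ) × ℕ) × BStr =>
        ((b.1.1.1, b.1.1.1 - b.1.1.2 - 1), (ev b.1.2 b.2).getD []))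
      (((hn.comp Primrec.fst).pair (hk.comp Primrec.fst)).pair he)
  exact Primrec.list_flatMap (primrec_strsLE.comp ha) hs

theorem length_bad (ev : ℕ → BStr → Option (List BStr)) (n α t : ℕ) (h : α + 1 ≤ n) :
    (bad ev n α t).length < 2 ^ n := by
  have h1 : (bad ev n α t).length ≤ (strsLE α).length * 2 ^ (n - α - 1) := by
    unfold bad
    generalize strsLE α = L
    induction L with
    | nil => simp
    | cons q L ih =>
      rw [List.flatMap_cons, List.length_append, List.length_cons, add_mul, one_mul, add_comm]
      exact Nat.add_le_add ih (length_small _ _ _)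
  have h2 := length_strsLE α
  have h3 : 2 ^ n = 2 ^ (α + 1) * 2 ^ (n - α - 1) := by
    rw [← pow_add]; congr 1; omega
  have h4 : 0 < 2 ^ (n - α - 1) := by positivity
  rw [h3, ← h2, add_mul]
  omega

theorem out_spec (ev : ℕ → BStr → Option (List BStr)) (n α t : ℕ) (h : α + 1 ≤ n) :
    (out ev n α t).length = n ∧ out ev n α t ∉ bad ev n α t := by
  have hne : sdiff (allStr n) (bad ev n α t) ≠ [] := by
    intro he
    have hsub : allStr n ⊆ bad ev n α t := by
      intro x hx
      by_contra hb
      have : x ∈ sdiff (allStr n) (bad ev n α t) := (mem_sdiff _ _ _).2 ⟨hx, hb⟩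
      rw [he] at this
      simp at this
    have := ((nodup_allStr n).subperm hsub).length_le
    rw [length_allStr] at this
    have := length_bad ev n α t h
    omega
  have hm : out ev n α t ∈ sdiff (allStr n) (bad ev n α t) := by
    unfold out
    cases hs : sdiff (allStr n) (bad ev n α t) with
    | nil => exact absurd hs hne
    | cons a l => simp
  rw [mem_sdiff, mem_allStr] at hm
  exact hm

/-- If the output lies in one of the sets, then the set is large. -/
theorem out_large (ev : ℕ → BStr → Option (List BStr)) (n α t : ℕ) (h : α + 1 ≤ n)
    (q : BStr) (hq : q.length ≤ α) (l : List BStr) (hl : ev t q = some l)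
    (hx : out ev n α t ∈ l) : 2 ^ (n - α - 1) ≤ l.toFinset.card := by
  obtain ⟨h1, h2⟩ := out_spec ev n α t h
  by_contra hlt
  push Not at hlt
  apply h2
  unfold bad
  rw [List.mem_flatMap]
  refine ⟨q, (mem_strsLE _ _).2 hq, ?_⟩
  have hmem : out ev n α t ∈ inter (allStr n) l :=
    (mem_inter _ _ _).2 ⟨(mem_allStr _ _).2 h1, hx⟩
  have hnd : (inter (allStr n) l).Nodup := (nodup_allStr n).filter _
  have hle : (inter (allStr n) l).length ≤ l.toFinset.card := by
    rw [← List.toFinset_card_of_nodup hnd]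
    apply Finset.card_le_card
    intro y hy
    rw [List.mem_toFinset] at hy ⊢
    exact ((mem_inter _ _ _).1 hy).2
  rw [hl]
  unfold small
  rw [length_allStr, Option.getD_some, if_pos (lt_of_le_of_lt hle hlt)]
  exact hmem

/-- Searching for a preimage under a computable function is partial recursive. -/
theorem partrec_inv {A T : Type} [Primcodable A] [Primcodable T] {g : A → T} (hg : Computable g) :
    ∃ f : T →. A, Partrec f ∧ (∀ y a, a ∈ f y → g a = y) ∧ (∀ a, ∃ b, b ∈ f (g a)) := by
  let F : T → ℕ → Option A := fun y k => (Encodable.decode k : Option A).bind fun a =>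
    cond (decide (g a = y)) (some a) none
  have hF : Computable₂ F := by
    refine Computable.option_bind (Computable.decode.comp Computable.snd) ?_
    have h1 : Computable (fun a : (T × ℕ) × A => decide (g a.2 = a.1.1)) := by
      have := (Primrec.eq (α := T)).decide.to_comp.comp (hg.comp (Computable.snd (α := T × ℕ) (β := A)))
        (Computable.fst.comp Computable.fst)
      exact this.of_eq (fun a => by simp)
    exact Computable.cond h1 (Computable.option_some.comp Computable.snd) (Computable.const none)
  refine ⟨fun y => Nat.rfindOpt (F y), Partrec.rfindOpt hF, ?_, ?_⟩
  · intro y a ha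
    obtain ⟨k, hk⟩ := Nat.rfindOpt_spec ha
    simp only [F, Option.mem_def, Option.bind_eq_some_iff] at hk
    obtain ⟨b, _, hb⟩ := hk
    by_cases hgb : g b = y
    · simp [hgb] at hb; rw [← hb]; exact hgb
    · simp [hgb] at hb
  · intro a
    have : (Nat.rfindOpt (F (g a))).Dom := by
      rw [Nat.rfindOpt_dom]
      exact ⟨Encodable.encode a, a, by simp [F]⟩
    exact ⟨_, Part.get_mem this⟩

theorem Cw_le_of_mem {D : BStr →. BStr} {x p : BStr} (h : x ∈ D p) : Cw D x ≤ (p.length : ℕ∞) :=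
  iInf₂_le p h

theorem Cw_ne_top {D : BStr →. BStr} (hD : OptimalDM D) (x : BStr) : Cw D x ≠ ⊤ := by
  obtain ⟨c, hc⟩ := hD.2 (fun p => Part.some p) Computable.id
  have h1 : Cw (fun p => Part.some p) x ≤ (x.length : ℕ∞) := Cw_le_of_mem (by simp)
  have h2 : Cw D x ≤ ((x.length + c : ℕ) : ℕ∞) := by
    push_cast
    exact (hc x).trans (by gcongr)
  exact ne_top_of_le_ne_top (ENat.natCast_ne_top _) h2

theorem exists_prog {D : BStr →. BStr} (hD : OptimalDM D) {x : BStr} {α : ℕ} (h : C D x ≤ α) :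
    ∃ q : BStr, q.length ≤ α ∧ x ∈ D q := by
  have h1 : Cw D x = (C D x : ℕ∞) := (ENat.natCast_toNat (Cw_ne_top hD x)).symm
  have h2 : Cw D x < ((α + 1 : ℕ) : ℕ∞) := by
    rw [h1]; exact_mod_cast Nat.lt_succ_of_le h
  unfold Cw at h2
  rw [iInf_lt_iff] at h2
  obtain ⟨q, hq⟩ := h2
  rw [iInf_lt_iff] at hq
  obtain ⟨hx, hq⟩ := hq
  have : q.length < α + 1 := by exact_mod_cast hq
  exact ⟨q, by omega, hx⟩

theorem size_bound (n α : ℕ) (h : α + 1 ≤ n) :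
    ((Nat.bits (Nat.pair n α)).length : ℝ) ≤ 2 * Real.logb 2 ((n : ℝ) + 2) + 1 := by
  rw [Nat.size_eq_bits_len]
  set m := Nat.pair n α with hm
  rcases Nat.eq_zero_or_pos m.size with h0 | h0
  · rw [h0]
    have : 0 ≤ Real.logb 2 ((n : ℝ) + 2) :=
      Real.logb_nonneg (by norm_num) (by have : (0 : ℝ) ≤ n := Nat.cast_nonneg n; linarith)
    push_cast; linarith
  · have h1 : 2 ^ (m.size - 1) ≤ m := by
      rw [← Nat.lt_size]; omega
    have h2 : m < (n + 1) ^ 2 := by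
      have := Nat.pair_lt_max_add_one_sq n α
      rwa [max_eq_left (by omega)] at this
    have h3 : (2 : ℝ) ^ (m.size - 1) ≤ ((n : ℝ) + 2) ^ 2 := by
      have h4 : 2 ^ (m.size - 1) ≤ (n + 2) ^ 2 := by nlinarith
      exact_mod_cast h4
    have h5 := Real.logb_le_logb_of_le (b := 2) (by norm_num) (by positivity) h3
    rw [Real.logb_pow, Real.logb_pow, Real.logb_self_eq_one (by norm_num)] at h5
    rw [Nat.cast_sub h0] at h5
    push_cast at h5
    linarith

end NonStoch

open NonStoch

/-- **Existence of non-stochastic objects.** -/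
theorem stmt5 (D : BStr →. BStr) (hD : OptimalDM D)
    (enc : Finset BStr → BStr) (henc : SetEncoding enc) :
    ∃ c : ℝ, ∀ n α β : ℕ,
      2 * (α : ℝ) + (β : ℝ) < (n : ℝ) - c * Real.logb 2 ((n : ℝ) + 2) →
      ∃ x : BStr, x.length = n ∧ ¬ Stochastic D enc α β x := by
  obtain ⟨inv, hinv, hinv1, hinv2⟩ := partrec_inv henc.2
  -- programs for sets
  let D1 : BStr →. List BStr := fun p => (D p).bind inv
  have hD1 : Partrec D1 := Partrec.bind hD.1 (hinv.comp Computable.snd)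
  obtain ⟨ev, hev, hmono, hspec⟩ := exists_ev hD1
  obtain ⟨dec, hdec, hdec1, hdec2⟩ := partrec_inv primrec_code.to_comp
  -- the description method for the bad string
  let G : BStr × BStr → ℕ → Option BStr := fun a t =>
    (ev t a.2).map fun _ => out ev (val a.1).unpair.1 (val a.1).unpair.2 t
  have hG : Primrec₂ G := by
    have hv : Primrec (fun b : ((BStr × BStr) × ℕ) × List BStr => (val b.1.1.1).unpair) :=
      Primrec.unpair.comp (primrec_val.comp
        (Primrec.fst.comp (Primrec.fst.comp Primrec.fst)))
    have ho : Primrec (fun b : ((BStr × BStr) × ℕ) × List BStr =>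
        out ev (val b.1.1.1).unpair.1 (val b.1.1.1).unpair.2 b.1.2) :=
      (primrec_out hev).comp (f := fun a : (ℕ × ℕ) × ℕ => out ev a.1.1 a.1.2 a.2)
        (g := fun b : ((BStr × BStr) × ℕ) × List BStr => ((val b.1.1.1).unpair, b.1.2))
        (hv.pair (Primrec.snd.comp Primrec.fst))
    have he : Primrec (fun b : (BStr × BStr) × ℕ => ev b.2 b.1.2) :=
      hev.comp Primrec.snd (Primrec.snd.comp Primrec.fst)
    exact Primrec.option_map he ho
  let D2 : BStr →. BStr := fun w => (dec w).bind fun a => Nat.rfindOpt (G a)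
  have hD2 : Partrec D2 := Partrec.bind hdec
    ((Partrec.rfindOpt hG.to_comp).comp Computable.snd)
  obtain ⟨c₀, hc₀⟩ := hD.2 D2 hD2
  refine ⟨8 + c₀, fun n α β hlt => ?_⟩
  have hlog : 1 ≤ Real.logb 2 ((n : ℝ) + 2) := by
    rw [Real.le_logb_iff_rpow_le (by norm_num) (by positivity)]
    have : (0 : ℝ) ≤ n := Nat.cast_nonneg n
    simpa using this
  have hc0 : (0 : ℝ) ≤ c₀ := Nat.cast_nonneg _
  have hprod : (c₀ : ℝ) ≤ c₀ * Real.logb 2 ((n : ℝ) + 2) := le_mul_of_one_le_right hc0 hlog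
  have hαn : α + 1 ≤ n := by
    have h1 : (0 : ℝ) ≤ α := Nat.cast_nonneg _
    have h2 : (0 : ℝ) ≤ β := Nat.cast_nonneg _
    have : (α : ℝ) + 1 ≤ n := by nlinarith
    exact_mod_cast this
  -- any stochastic string comes from a halting program
  have hprog : ∀ S : Finset BStr, C D (enc S) ≤ α →
      ∃ q : BStr, q.length ≤ α ∧ (∃ l, l ∈ D1 q) ∧ ∀ l ∈ D1 q, l.toFinset = S := by
    intro S hS
    obtain ⟨q, hq, hqS⟩ := exists_prog hD hS
    refine ⟨q, hq, ?_, ?_⟩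
    · obtain ⟨b, hb⟩ := hinv2 S.toList
      rw [Finset.toList_toFinset] at hb
      exact ⟨b, Part.mem_bind hqS hb⟩
    · intro l hl
      obtain ⟨y, hy, hly⟩ := Part.mem_bind_iff.1 hl
      have hy' := Part.mem_unique hy hqS
      subst hy'
      exact henc.1 (hinv1 _ _ hly)
  let P : Finset BStr := (strsLE α).toFinset.filter fun q => ∃ t, ∃ l, ev t q = some l
  have hP : ∀ q, q ∈ P ↔ q.length ≤ α ∧ ∃ t, ∃ l, ev t q = some l := by
    intro q
    simp only [P, Finset.mem_filter, List.mem_toFinset, mem_strsLE]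
  rcases P.eq_empty_or_nonempty with hPe | hPne
  · refine ⟨List.replicate n false, by simp, ?_⟩
    rintro ⟨S, _, hS, _⟩
    obtain ⟨q, hq, ⟨l, hl⟩, _⟩ := hprog S hS
    obtain ⟨t, ht⟩ := (hspec q l).1 hl
    have : q ∈ P := (hP q).2 ⟨hq, t, l, ht⟩
    rw [hPe] at this
    simp at this
  · let T : BStr → ℕ := fun q => sInf {t | ∃ l, ev t q = some l}
    obtain ⟨p, hp, hmax⟩ := P.exists_max_image T hPne
    obtain ⟨hpα, tp, lp, hlp⟩ := (hP p).1 hp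
    let u := Nat.bits (Nat.pair n α)
    have hdom : (Nat.rfindOpt (G (u, p))).Dom := by
      rw [Nat.rfindOpt_dom]
      exact ⟨tp, _, by simp only [G, hlp, Option.map_some, Option.mem_def]; rfl⟩
    obtain ⟨x, hx⟩ := Part.dom_iff_mem.1 hdom
    obtain ⟨t, ht⟩ := Nat.rfindOpt_spec hx
    simp only [G, Option.mem_def, Option.map_eq_some_iff] at ht
    obtain ⟨l', hl', hxo⟩ := ht
    have hu : val u = Nat.pair n α := val_bits _
    rw [hu, Nat.unpair_pair] at hxo
    simp only at hxo
    have hxD : x ∈ D2 (code (u, p)) := by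
      obtain ⟨b, hb⟩ := hdec2 (u, p)
      have hb2 := hdec1 _ _ hb
      obtain ⟨e1, e2⟩ := code_inj b.1 u b.2 p hb2
      have : b = (u, p) := Prod.ext e1 e2
      rw [this] at hb
      exact Part.mem_bind hb hx
    refine ⟨x, ?_, ?_⟩
    · rw [← hxo]; exact (out_spec ev n α t hαn).1
    rintro ⟨S, hxS, hS, hCx⟩
    obtain ⟨q, hq, ⟨l, hl⟩, huniq⟩ := hprog S hS
    obtain ⟨tq, htq⟩ := (hspec q l).1 hl
    have hqP : q ∈ P := (hP q).2 ⟨hq, tq, l, htq⟩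
    have hTq : ∃ l, ev (T q) q = some l :=
      Nat.sInf_mem (s := {t | ∃ l, ev t q = some l}) ⟨tq, l, htq⟩
    have hTp : T p ≤ t := Nat.sInf_le (s := {t | ∃ l, ev t p = some l}) ⟨l', hl'⟩
    obtain ⟨l2, hl2⟩ := hTq
    have hevt : ev t q = some l2 := hmono _ _ _ _ ((hmax q hqP).trans hTp) hl2
    have hl2S : l2.toFinset = S := huniq l2 ((hspec q l2).2 ⟨t, hevt⟩)
    have hcard : 2 ^ (n - α - 1) ≤ S.card := by
      have hm : out ev n α t ∈ l2 := by
        rw [hxo, ← List.mem_toFinset, hl2S]; exact hxS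
      have := out_large ev n α t hαn q hq l2 hevt hm
      rwa [hl2S] at this
    have hlogS : (n : ℝ) - α - 1 ≤ Real.logb 2 S.card := by
      have h1 : (2 : ℝ) ^ (n - α - 1) ≤ (S.card : ℝ) := by exact_mod_cast hcard
      have h2 := Real.logb_le_logb_of_le (b := 2) (by norm_num) (by positivity) h1
      rw [Real.logb_pow, Real.logb_self_eq_one (by norm_num), Nat.sub_sub, Nat.cast_sub hαn] at h2
      push_cast at h2
      linarith
    have hCle : C D x ≤ 2 * u.length + 1 + p.length + c₀ := by
      apply ENat.toNat_le_of_le_natCast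
      have h1 := Cw_le_of_mem hxD
      rw [length_code] at h1
      refine (hc₀ x).trans ?_
      push_cast at h1 ⊢
      gcongr
    have hCle' : (C D x : ℝ) ≤ 2 * (u.length : ℝ) + 1 + p.length + c₀ := by exact_mod_cast hCle
    have hus : (u.length : ℝ) ≤ 2 * Real.logb 2 ((n : ℝ) + 2) + 1 := size_bound n α hαn
    have hpα' : (p.length : ℝ) ≤ α := by exact_mod_cast hpα
    nlinarith
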